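/- Corollary 1 (rectangle): if a12 = a34 = a, then the length of the minimum construction tree equals 4·a·cos(θ/2) = 4·a·d/√(d² + a²), and the length of the full Steiner tree equals a·(√3 + cos(θ/2)/sin(θ/2)); here θ = 2·arctan(a/d). In symbols: 2·dist(A₁',F₁₂) + 2·dist(A₃,F₃₄) + 2·sin(θ/2)·dist(F₁₂,F₃₄) = 4·a·d/√(d² + a²) and 2·dist(A₁',O₁₂) + 2·dist(A₃,O₃₄) + dist(O₁₂,O₃₄) = a·(√3 + cos(θ/2)/sin(θ/2)). -/

import Mathlib

open Real EuclideanGeometry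

noncomputable def pt (x y : ℝ) : EuclideanSpace ℝ (Fin 2) :=
  (WithLp.equiv 2 (Fin 2 → ℝ)).symm ![x, y]

/-!
Each of the two trees joins the vertices of the rectangle to two branch points on its vertical axis
by four edges of a common inclination `φ` to the horizontal sides. If those sides have length
`2 * w` and the others length `h`, an edge at a vertex has length `w / cos φ` and the two branch
points are `h - 2 * w * tan φ` apart. For the minimum construction tree `φ = θ / 2`, and the weight
`2 * sin φ` of the middle edge turns `1 / cos φ` into `cos φ` through `1 - sin φ ^ 2 = cos φ ^ 2`.
For the full Steiner tree all edges meet at `120°`, that is `φ = π / 6`, and the middle edge has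
weight `1`.
-/

theorem dist_pt (x y x' y' : ℝ) :
    dist (pt x y) (pt x' y') = √((x - x') ^ 2 + (y - y') ^ 2) := by
  simp [pt, EuclideanSpace.dist_eq, Real.dist_eq, sq_abs]

theorem dist_pt_same_left (x y y' : ℝ) : dist (pt x y) (pt x y') = |y - y'| := by
  simp only [dist_pt, sub_self, zero_pow two_ne_zero, zero_add, Real.sqrt_sq_eq_abs]

theorem dist_pt_eq_div_cos {x y x' y' φ : ℝ} (hφ : 0 < cos φ)
    (hslope : |y - y'| = |(x - x') * tan φ|) :
    dist (pt x y) (pt x' y') = |x - x'| / cos φ := by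
  have hsq : (x - x') ^ 2 + (y - y') ^ 2 = (|x - x'| / cos φ) ^ 2 := by
    rw [(sq_eq_sq_iff_abs_eq_abs _ _).mpr hslope, div_pow, sq_abs, tan_eq_sin_div_cos]
    field_simp
    rw [cos_sq_add_sin_sq, mul_one]
  rw [dist_pt, hsq, Real.sqrt_sq (by positivity)]

/-- The weighted length of the tree joining the vertices of the rectangle `[-w, w] × [0, h]` to two
branch points on its axis `x = 0` by four edges of inclination `φ`, and the branch points to each
other by an edge of weight `m`. The two edges at a branch point are mirror images in the axis, so
only one of them is written, with coefficient `2`. -/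
noncomputable def branchedTreeLength (w h φ m : ℝ) : ℝ :=
  2 * dist (pt (-w) h) (pt 0 (h - w * tan φ)) + 2 * dist (pt w 0) (pt 0 (w * tan φ)) +
    m * dist (pt 0 (h - w * tan φ)) (pt 0 (w * tan φ))

theorem branchedTreeLength_eq {w h φ : ℝ} (hw : 0 ≤ w) (hφ : 0 < cos φ)
    (hgap : 2 * w * tan φ ≤ h) (m : ℝ) :
    branchedTreeLength w h φ m = 4 * w / cos φ + m * (h - 2 * w * tan φ) := by
  have upper : dist (pt (-w) h) (pt 0 (h - w * tan φ)) = w / cos φ := by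
    rw [dist_pt_eq_div_cos hφ (by simp [abs_mul]), sub_zero, abs_neg, abs_of_nonneg hw]
  have lower : dist (pt w 0) (pt 0 (w * tan φ)) = w / cos φ := by
    rw [dist_pt_eq_div_cos hφ (by simp), sub_zero, abs_of_nonneg hw]
  have middle : dist (pt 0 (h - w * tan φ)) (pt 0 (w * tan φ)) = h - 2 * w * tan φ := by
    rw [dist_pt_same_left, abs_of_nonneg (by linarith)]
    ring
  rw [branchedTreeLength, upper, lower, middle]
  ring

theorem branchedTreeLength_two_mul_sin {w h φ : ℝ} (hw : 0 ≤ w) (hφ : 0 < cos φ)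
    (hgap : 2 * w * tan φ ≤ h) :
    branchedTreeLength w h φ (2 * sin φ) = 4 * w * cos φ + 2 * h * sin φ := by
  rw [branchedTreeLength_eq hw hφ hgap, tan_eq_sin_div_cos]
  field_simp
  linear_combination -4 * w * sin_sq_add_cos_sq φ

theorem branchedTreeLength_pi_div_six {w h : ℝ} (hw : 0 ≤ w) (hgap : 2 * w ≤ √3 * h) :
    branchedTreeLength w h (π / 6) 1 = 2 * √3 * w + h := by
  have hcos : 0 < cos (π / 6) := by rw [cos_pi_div_six]; positivity
  have hgap' : 2 * w * tan (π / 6) ≤ h := by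
    rw [tan_pi_div_six, mul_one_div]
    exact (div_le_iff₀' (by positivity)).mpr hgap
  rw [branchedTreeLength_eq hw hcos hgap', cos_pi_div_six, tan_pi_div_six]
  field_simp
  linear_combination -2 * w * Real.sq_sqrt (zero_le_three (α := ℝ))

theorem cos_arctan_div (a : ℝ) {d : ℝ} (hd : 0 < d) :
    cos (arctan (a / d)) = d / √(d ^ 2 + a ^ 2) := by
  have hsqrt : √(d ^ 2 + a ^ 2) = d * √(1 + (a / d) ^ 2) := by
    rw [← Real.sqrt_sq hd.le, ← Real.sqrt_mul (sq_nonneg d), Real.sqrt_sq hd.le]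
    congr 1
    field_simp
  rw [cos_arctan, hsqrt, div_mul_cancel_left₀ hd.ne', one_div]

theorem mul_sin_arctan_div (a : ℝ) {d : ℝ} (hd : d ≠ 0) :
    d * sin (arctan (a / d)) = a * cos (arctan (a / d)) := by
  rw [← tan_mul_cos (cos_arctan_pos _).ne', tan_arctan, ← mul_assoc, mul_div_cancel₀ a hd]

theorem stmt_16 (a d θ : ℝ) (ha : 0 < a) (had : a < d)
    (hθ : θ = 2 * Real.arctan (a / d))
    (A₁' A₂' A₃ A₄ F₁₂ F₃₄ O₁₂ O₃₄ : EuclideanSpace ℝ (Fin 2))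
    (hA₁ : A₁' = pt (-(a / 2)) d) (hA₂ : A₂' = pt (a / 2) d)
    (hA₃ : A₃ = pt (a / 2) 0) (hA₄ : A₄ = pt (-(a / 2)) 0)
    (hF₁₂ : F₁₂ = pt 0 (d - a / 2 * Real.tan (θ / 2)))
    (hF₃₄ : F₃₄ = pt 0 (a / 2 * Real.tan (θ / 2)))
    (hO₁₂ : O₁₂ = pt 0 (d - a / (2 * Real.sqrt 3)))
    (hO₃₄ : O₃₄ = pt 0 (a / (2 * Real.sqrt 3))) :
    2 * dist A₁' F₁₂ + 2 * dist A₃ F₃₄ + 2 * Real.sin (θ / 2) * dist F₁₂ F₃₄ =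
      4 * a * Real.cos (θ / 2) ∧
    4 * a * Real.cos (θ / 2) = 4 * a * d / Real.sqrt (d ^ 2 + a ^ 2) ∧
    2 * dist A₁' O₁₂ + 2 * dist A₃ O₃₄ + dist O₁₂ O₃₄ =
      a * (Real.sqrt 3 + Real.cos (θ / 2) / Real.sin (θ / 2)) := by
  have hd : 0 < d := ha.trans had
  have hφ : θ / 2 = arctan (a / d) := by rw [hθ, mul_div_cancel_left₀ _ two_ne_zero]
  have hcos : 0 < cos (θ / 2) := hφ ▸ cos_arctan_pos _
  have hdiag : d * sin (θ / 2) = a * cos (θ / 2) := hφ ▸ mul_sin_arctan_div a hd.ne'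
  have hsin : 0 < sin (θ / 2) := pos_of_mul_pos_right (hdiag ▸ mul_pos ha hcos) hd.le
  subst hA₁ hA₃ hF₁₂ hF₃₄ hO₁₂ hO₃₄
  refine ⟨?_, ?_, ?_⟩
  · have htan : tan (θ / 2) ≤ 1 := by rw [hφ, tan_arctan]; exact (div_le_one hd).mpr had.le
    have hgap : 2 * (a / 2) * tan (θ / 2) ≤ d := by nlinarith
    have hlength := branchedTreeLength_two_mul_sin (half_pos ha).le hcos hgap
    rw [branchedTreeLength] at hlength
    linear_combination hlength + 2 * hdiag
  · rw [hφ, cos_arctan_div a hd, mul_div_assoc]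
  · have hsqrt : 1 ≤ √3 := Real.one_le_sqrt.mpr (by norm_num)
    have hgap : 2 * (a / 2) ≤ √3 * d := by nlinarith
    have hlength := branchedTreeLength_pi_div_six (half_pos ha).le hgap
    have hbranch : a / 2 * tan (π / 6) = a / (2 * √3) := by
      rw [tan_pi_div_six, div_mul_div_comm, mul_one]
    have hcot : d = a * (cos (θ / 2) / sin (θ / 2)) := by
      rw [← mul_div_assoc, eq_div_iff hsin.ne', hdiag]
    rw [branchedTreeLength, hbranch] at hlength
    linear_combination hlength + hcot
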